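/- arXiv:2110.08129 — 2 statements merged into one kernel-verified Lean document; each statement's English description precedes it below -/
import Mathlib

section
/- Cauchy formula for repeated integration (the Riemann–Liouville integral of integer order n coincides with the n-fold iterated integral): Let n ≥ 1 be an integer, a < b, and let f : ℝ → ℝ be continuous on [a,b]. Define F(x) = (1/(n−1)!) ∫_a^x (x−u)^(n−1) f(u) du. Then the n-th iterated derivative of F equals f at every x ∈ (a,b), and the k-th iterated derivative of F at a equals 0 for every 0 ≤ k ≤ n−1. -/
open MeasureTheory Real Set

/-!
Fubini on the triangle with vertices `(a, a)`, `(a, x)`, `(x, x)` shows that the integral of order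
`m + 2` is a primitive of the integral of order `m + 1`, so each derivative lowers the order by one.

The two-sided derivatives at `a` also involve the values of `f` to the left of `a`, where nothing
is assumed. If `f` is integrable on some `(c, a]`, the argument applies across `a`. Otherwise
`(x - u) ^ m • f u` is not integrable on `(x, a]` for any `x < a`, because the kernel is bounded
away from zero near `u = a`. Its integral is then `0` by convention, as if `f` vanished there.
-/

theorem intervalIntegrable_of_locallyIntegrable {E : Type*} [NormedAddCommGroup E] {μ : Measure ℝ}
    {f : ℝ → E} (hf : LocallyIntegrable f μ) (a b : ℝ) : IntervalIntegrable f μ a b :=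
  (hf.integrableOn_isCompact isCompact_uIcc).intervalIntegrable

section Triangle

open scoped Interval

variable {E : Type*} [NormedAddCommGroup E] [NormedSpace ℝ E] {a b : ℝ}

theorem integrableOn_uIoc_prod_smul_snd {μ ν : Measure ℝ} [IsLocallyFiniteMeasure μ] [SFinite ν]
    {c d : ℝ} {w : ℝ × ℝ → ℝ} {f : ℝ → E} (hw : ContinuousOn w ([[a, b]] ×ˢ [[c, d]]))
    (hf : IntervalIntegrable f ν c d) :
    IntegrableOn (fun p => w p • f p.2) (Ι a b ×ˢ Ι c d) (μ.prod ν) := by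
  have : IsFiniteMeasure (μ.restrict (Ι a b)) :=
    isFiniteMeasure_restrict.2 measure_Ioc_lt_top.ne
  have hsnd : IntegrableOn (fun p : ℝ × ℝ => f p.2) (Ι a b ×ˢ Ι c d) (μ.prod ν) := by
    rw [IntegrableOn, ← Measure.prod_restrict]
    exact hf.def'.comp_snd _
  exact hsnd.continuousOn_smul_of_subset hw (isCompact_uIcc.prod isCompact_uIcc)
    (measurableSet_uIoc.prod measurableSet_uIoc) (prod_mono uIoc_subset_uIcc uIoc_subset_uIcc)

variable {μ : Measure ℝ} [SFinite μ] [NullSingletonClass μ] {G : ℝ → ℝ → E}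

theorem intervalIntegral_triangle_swap_of_le (hab : a ≤ b)
    (hG : IntegrableOn (Function.uncurry G) (Ioc a b ×ˢ Ioc a b) (μ.prod μ)) :
    ∫ t in a..b, ∫ u in a..t, G t u ∂μ ∂μ = ∫ u in a..b, ∫ t in u..b, G t u ∂μ ∂μ := by
  let T : Set (ℝ × ℝ) := {p | p.2 ≤ p.1}
  have hT : MeasurableSet T := measurableSet_le measurable_snd measurable_fst
  have lower_slice (t : ℝ) (ht : t ∈ Ioc a b) :
      ∫ u in Ioc a b, T.indicator (Function.uncurry G) (t, u) ∂μ = ∫ u in a..t, G t u ∂μ := by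
    have hslice : Ioc a b ∩ Iic t = Ioc a t := by rw [Ioc_inter_Iic, min_eq_right ht.2]
    rw [intervalIntegral.integral_of_le ht.1.le, ← hslice,
      ← setIntegral_indicator measurableSet_Iic]
    rfl
  have upper_slice (u : ℝ) (hu : u ∈ Ioc a b) :
      ∫ t in Ioc a b, T.indicator (Function.uncurry G) (t, u) ∂μ = ∫ t in u..b, G t u ∂μ := by
    have hslice : Ioc a b ∩ Ici u = Icc u b := by
      ext t
      exact ⟨fun h => ⟨h.2, h.1.2⟩, fun h => ⟨⟨hu.1.trans_le h.1, h.2⟩, h.1⟩⟩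
    rw [intervalIntegral.integral_of_le hu.2, ← integral_Icc_eq_integral_Ioc (x := u), ← hslice,
      ← setIntegral_indicator measurableSet_Ici]
    rfl
  have hint : Integrable (T.indicator (Function.uncurry G))
      ((μ.restrict (Ioc a b)).prod (μ.restrict (Ioc a b))) := by
    rw [Measure.prod_restrict]
    exact hG.indicator hT
  rw [intervalIntegral.integral_of_le hab, intervalIntegral.integral_of_le hab,
    ← setIntegral_congr_fun measurableSet_Ioc lower_slice,
    ← setIntegral_congr_fun measurableSet_Ioc upper_slice]
  exact integral_integral_swap hint

theorem intervalIntegral_triangle_swap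
    (hG : IntegrableOn (Function.uncurry G) (Ι a b ×ˢ Ι a b) (μ.prod μ)) :
    ∫ t in a..b, ∫ u in a..t, G t u ∂μ ∂μ = ∫ u in a..b, ∫ t in u..b, G t u ∂μ ∂μ := by
  rcases le_total a b with hab | hba
  · rw [uIoc_of_le hab] at hG
    exact intervalIntegral_triangle_swap_of_le hab hG
  · rw [uIoc_of_ge hba] at hG
    have hswap := intervalIntegral_triangle_swap_of_le (G := fun u t => G t u) hba hG.swap
    simp only [intervalIntegral.integral_symm _ a, intervalIntegral.integral_symm b,
      intervalIntegral.integral_neg, neg_neg] at hswap ⊢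
    exact hswap.symm

end Triangle

section RiemannLiouville

open scoped Interval Nat

variable {E : Type*} [NormedAddCommGroup E] [NormedSpace ℝ E]

/-- The left Riemann–Liouville integral of `f` with base point `a`, of integer order `m + 1`. The
order is shifted so that no truncated subtraction occurs. -/
noncomputable def riemannLiouvilleIntegral (a : ℝ) (m : ℕ) (f : ℝ → E) (x : ℝ) : E :=
  (m ! : ℝ)⁻¹ • ∫ u in a..x, (x - u) ^ m • f u

variable {a b x : ℝ} {f g : ℝ → E}

theorem riemannLiouvilleIntegral_self (a : ℝ) (m : ℕ) (f : ℝ → E) :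
    riemannLiouvilleIntegral a m f a = 0 := by
  simp [riemannLiouvilleIntegral]

theorem riemannLiouvilleIntegral_zero (a : ℝ) (f : ℝ → E) :
    riemannLiouvilleIntegral a 0 f = fun x => ∫ u in a..x, f u := by
  ext x
  simp [riemannLiouvilleIntegral]

theorem riemannLiouvilleIntegral_congr (m : ℕ) (h : EqOn f g (Ι a x)) :
    riemannLiouvilleIntegral a m f x = riemannLiouvilleIntegral a m g x := by
  unfold riemannLiouvilleIntegral
  congr 1
  refine intervalIntegral.integral_congr_ae (.of_forall fun u hu => ?_)
  simp only [h hu]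

theorem intervalIntegrable_of_intervalIntegrable_sub_pow_smul {m : ℕ} {c : ℝ}
    (h : IntervalIntegrable (fun u => (x - u) ^ m • f u) volume a x) (hc : c ∈ [[a, x]])
    (hcx : x ∉ [[a, c]]) : IntervalIntegrable f volume a c := by
  have hne : ∀ u ∈ [[a, c]], (x - u) ^ m ≠ 0 := fun u hu =>
    pow_ne_zero m (sub_ne_zero.2 fun hxu => hcx (hxu ▸ hu))
  refine ((h.mono_set (uIcc_subset_uIcc_left hc)).continuousOn_smul
    (f := fun u => ((x - u) ^ m)⁻¹) (ContinuousOn.inv₀ (by fun_prop) hne)).congr ?_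
  intro u hu
  exact inv_smul_smul₀ (hne u (uIoc_subset_uIcc hu)) (f u)

section Complete

variable [CompleteSpace E]

theorem riemannLiouvilleIntegral_succ_apply (m : ℕ) (hf : IntervalIntegrable f volume a x) :
    riemannLiouvilleIntegral a (m + 1) f x = ∫ t in a..x, riemannLiouvilleIntegral a m f t := by
  have kernel (u : ℝ) :
      ∫ t in u..x, (t - u) ^ m • f u = ((m + 1 : ℝ)⁻¹ * (x - u) ^ (m + 1)) • f u := by
    rw [intervalIntegral.integral_smul_const, intervalIntegral.integral_comp_sub_right (· ^ m),
      integral_pow]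
    simp [div_eq_inv_mul]
  have hint : IntegrableOn (Function.uncurry fun t u => (t - u) ^ m • f u) (Ι a x ×ˢ Ι a x) :=
    integrableOn_uIoc_prod_smul_snd (w := fun p => (p.1 - p.2) ^ m) (by fun_prop) hf
  simp only [riemannLiouvilleIntegral]
  rw [intervalIntegral.integral_smul, intervalIntegral_triangle_swap hint]
  simp only [kernel, mul_smul, intervalIntegral.integral_smul]
  rw [smul_smul, Nat.factorial_succ]
  push_cast
  rw [mul_inv_rev]

theorem riemannLiouvilleIntegral_succ (a : ℝ) (m : ℕ) (hf : LocallyIntegrable f) :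
    riemannLiouvilleIntegral a (m + 1) f =
      fun x => ∫ t in a..x, riemannLiouvilleIntegral a m f t := by
  ext x
  exact riemannLiouvilleIntegral_succ_apply m (intervalIntegrable_of_locallyIntegrable hf a x)

theorem continuous_riemannLiouvilleIntegral (a : ℝ) (m : ℕ) (hf : LocallyIntegrable f) :
    Continuous (riemannLiouvilleIntegral a m f) := by
  induction m with
  | zero =>
    rw [riemannLiouvilleIntegral_zero]
    exact intervalIntegral.continuous_primitive (intervalIntegrable_of_locallyIntegrable hf) a
  | succ m ih =>
    rw [riemannLiouvilleIntegral_succ a m hf]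
    exact intervalIntegral.continuous_primitive (fun _ _ => ih.intervalIntegrable _ _) a

theorem deriv_riemannLiouvilleIntegral_succ (a : ℝ) (m : ℕ) (hf : LocallyIntegrable f) :
    deriv (riemannLiouvilleIntegral a (m + 1) f) = riemannLiouvilleIntegral a m f := by
  ext x
  rw [riemannLiouvilleIntegral_succ a m hf]
  exact (continuous_riemannLiouvilleIntegral a m hf).deriv_integral _ a x

theorem iteratedDeriv_riemannLiouvilleIntegral_add (a : ℝ) (m k : ℕ) (hf : LocallyIntegrable f) :
    iteratedDeriv k (riemannLiouvilleIntegral a (m + k) f) = riemannLiouvilleIntegral a m f := by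
  induction k with
  | zero => simp
  | succ k ih =>
    rw [iteratedDeriv_succ', ← add_assoc, deriv_riemannLiouvilleIntegral_succ a _ hf, ih]

theorem iteratedDeriv_succ_riemannLiouvilleIntegral (a : ℝ) (m : ℕ) (hf : LocallyIntegrable f)
    (hfx : ContinuousAt f x) : iteratedDeriv (m + 1) (riemannLiouvilleIntegral a m f) x = f x := by
  have hm := iteratedDeriv_riemannLiouvilleIntegral_add a 0 m hf
  rw [zero_add] at hm
  rw [iteratedDeriv_succ, hm, riemannLiouvilleIntegral_zero]
  exact intervalIntegral.deriv_integral_right (intervalIntegrable_of_locallyIntegrable hf a x)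
    hf.aestronglyMeasurable.stronglyMeasurableAtFilter hfx

end Complete

theorem riemannLiouvilleIntegral_eq_zero_of_not_intervalIntegrable (m : ℕ) (hxa : x < a)
    (hf : ∀ c < a, ¬ IntervalIntegrable f volume a c) : riemannLiouvilleIntegral a m f x = 0 := by
  obtain ⟨c, hxc, hca⟩ := exists_between hxa
  have hc : c ∈ [[a, x]] := mem_uIcc_of_ge hxc.le hca.le
  have hxc' : x ∉ [[a, c]] := notMem_uIcc_of_lt hxa hxc
  have hint : ¬ IntervalIntegrable (fun u => (x - u) ^ m • f u) volume a x := fun h =>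
    hf c hca (intervalIntegrable_of_intervalIntegrable_sub_pow_smul h hc hxc')
  rw [riemannLiouvilleIntegral, intervalIntegral.integral_undef hint, smul_zero]

theorem exists_locallyIntegrable_riemannLiouvilleIntegral_eqOn (m : ℕ) (hab : a < b)
    (hf : IntervalIntegrable f volume a b) :
    ∃ g : ℝ → E, LocallyIntegrable g ∧ EqOn f g (Ioo a b) ∧
      ∃ c < a,
        EqOn (riemannLiouvilleIntegral a m f) (riemannLiouvilleIntegral a m g) (Ioo c b) := by
  have eqOn_indicator (c : ℝ) : EqOn f ((Ioc c b).indicator f) (Ioc c b) :=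
    fun u hu => (indicator_of_mem hu f).symm
  by_cases hleft : ∃ c < a, IntervalIntegrable f volume a c
  · obtain ⟨c, hca, hfc⟩ := hleft
    have hcb : c < b := hca.trans hab
    have hint := (intervalIntegrable_iff_integrableOn_Ioc_of_le hcb.le).1 (hfc.symm.trans hf)
    refine ⟨(Ioc c b).indicator f, (hint.integrable_indicator measurableSet_Ioc).locallyIntegrable,
      (eqOn_indicator c).mono (Ioo_subset_Ioc_self.trans (Ioc_subset_Ioc_left hca.le)),
      c, hca, fun x hx => ?_⟩
    refine riemannLiouvilleIntegral_congr m ((eqOn_indicator c).mono ?_)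
    exact Ioc_subset_Ioc (lt_min hca hx.1).le (max_le hab.le hx.2.le)
  · push Not at hleft
    have hint := (intervalIntegrable_iff_integrableOn_Ioc_of_le hab.le).1 hf
    refine ⟨(Ioc a b).indicator f, (hint.integrable_indicator measurableSet_Ioc).locallyIntegrable,
      (eqOn_indicator a).mono Ioo_subset_Ioc_self, a - 1, sub_one_lt a, fun x hx => ?_⟩
    rcases le_or_gt a x with hax | hxa
    · refine riemannLiouvilleIntegral_congr m ((eqOn_indicator a).mono ?_)
      rw [uIoc_of_le hax]
      exact Ioc_subset_Ioc_right hx.2.le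
    · have hzero : EqOn ((Ioc a b).indicator f) 0 (Ι a x) := fun u hu => by
        rw [uIoc_of_ge hxa.le] at hu
        exact indicator_of_notMem (fun hu' => hu'.1.not_ge hu.2) f
      rw [riemannLiouvilleIntegral_eq_zero_of_not_intervalIntegrable m hxa hleft,
        riemannLiouvilleIntegral_congr m hzero]
      simp [riemannLiouvilleIntegral]

theorem cauchy_repeated_integration_general [CompleteSpace E] (m : ℕ) (hab : a < b)
    (hf : IntervalIntegrable f volume a b) :
    (∀ x ∈ Ioo a b, ContinuousAt f x →
      iteratedDeriv (m + 1) (riemannLiouvilleIntegral a m f) x = f x) ∧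
    ∀ k ≤ m, iteratedDeriv k (riemannLiouvilleIntegral a m f) a = 0 := by
  obtain ⟨g, hg, hfg, c, hca, hFG⟩ :=
    exists_locallyIntegrable_riemannLiouvilleIntegral_eqOn m hab hf
  constructor
  · intro x hx hfx
    have hgx : ContinuousAt g x :=
      hfx.congr (hfg.eventuallyEq_of_mem (Ioo_mem_nhds hx.1 hx.2))
    have hnear := hFG.eventuallyEq_of_mem (Ioo_mem_nhds (hca.trans hx.1) hx.2)
    rw [hnear.iteratedDeriv_eq, iteratedDeriv_succ_riemannLiouvilleIntegral a m hg hgx, hfg hx]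
  · intro k hk
    obtain ⟨j, rfl⟩ := Nat.exists_eq_add_of_le' hk
    have hnear := hFG.eventuallyEq_of_mem (Ioo_mem_nhds hca hab)
    rw [hnear.iteratedDeriv_eq, iteratedDeriv_riemannLiouvilleIntegral_add a j k hg,
      riemannLiouvilleIntegral_self]

end RiemannLiouville

/-- Cauchy formula for repeated integration: the Riemann–Liouville integral of
integer order `n` is the `n`-fold iterated integral, i.e. its `n`-th iterated
derivative is `f` on `(a,b)` and all its iterated derivatives of order `≤ n-1`
vanish at `a`. -/
theorem cauchy_repeated_integration
    (n : ℕ) (hn : 1 ≤ n) (a b : ℝ) (hab : a < b) (f : ℝ → ℝ)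
    (hf : ContinuousOn f (Set.Icc a b))
    (F : ℝ → ℝ)
    (hF : ∀ x, F x = (1 / (Nat.factorial (n - 1) : ℝ)) *
        ∫ u in a..x, (x - u) ^ (n - 1) * f u) :
    (∀ x ∈ Set.Ioo a b, iteratedDeriv n F x = f x) ∧
    (∀ k : ℕ, k ≤ n - 1 → iteratedDeriv k F a = 0) := by
  obtain ⟨m, rfl⟩ := Nat.exists_eq_add_of_le' hn
  obtain rfl : F = riemannLiouvilleIntegral a m f := by
    ext x
    simp [hF, riemannLiouvilleIntegral]
  have hcauchy := cauchy_repeated_integration_general m hab (hf.intervalIntegrable_of_Icc hab.le)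
  exact ⟨fun x hx => hcauchy.1 x hx (hf.continuousAt (Icc_mem_nhds hx.1 hx.2)), hcauchy.2⟩
end

section
/- The Mittag-Leffler function solves the fractional relaxation equation (Example 2): Let 0 < α < 1 and set y(x) = ∑_{k=0}^∞ x^(αk)/Γ(αk+1) for x ≥ 0, with base point a = 0. Then y(0) = 1, y is differentiable on (0,∞), and for every x > 0 the Caputo derivative of order α satisfies ᶜD^α y(x) = (1/Γ(1−α)) ∫_0^x y'(u)·(x−u)^(−α) du = y(x). -/
open MeasureTheory Real Set

/-! The Caputo derivative of a constant vanishes, and by Euler's beta integral that of `u ^ s` is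
`Γ(s + 1) / Γ(s + 1 - α) * x ^ (s - α)`. Normalising `x ^ (α * k)` by `Γ(α * k + 1)`, the operator
therefore shifts the Mittag-Leffler series by one index. Termwise application is legitimate because
`Γ(s + 1)` outgrows every exponential `M ^ s`. -/

variable {E : Type*} [NormedAddCommGroup E] [NormedSpace ℝ E]

section GammaGrowth

theorem rpow_mul_exp_neg_le_Gamma_add_one {M s : ℝ} (hM : 0 ≤ M) (hs : 0 ≤ s) :
    M ^ s * exp (-M) ≤ Gamma (s + 1) := by
  have hconv : IntegrableOn (fun x ↦ exp (-x) * x ^ s) (Ioi 0) := by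
    simpa using GammaIntegral_convergent (s := s + 1) (by positivity)
  have hsub : Ioi M ⊆ Ioi 0 := Ioi_subset_Ioi hM
  calc
    M ^ s * exp (-M) = ∫ x in Ioi M, exp (-x) * M ^ s := by
      rw [integral_mul_const, integral_exp_neg_Ioi, mul_comm]
    _ ≤ ∫ x in Ioi M, exp (-x) * x ^ s := by
      refine setIntegral_mono_on ((integrableOn_exp_neg_Ioi M).mul_const _)
        (hconv.mono_set hsub) measurableSet_Ioi fun x hx ↦ ?_
      gcongr
      exact hx.le
    _ ≤ ∫ x in Ioi 0, exp (-x) * x ^ s :=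
      setIntegral_mono_set hconv
        (ae_restrict_of_forall_mem measurableSet_Ioi fun x hx ↦
          mul_nonneg (exp_pos _).le (rpow_nonneg hx.le _))
        hsub.eventuallyLE
    _ = Gamma (s + 1) := by rw [Gamma_eq_integral (by positivity), add_sub_cancel_right]

theorem summable_pow_div_Gamma {α : ℝ} (hα : 0 < α) (z : ℝ) :
    Summable fun k : ℕ ↦ z ^ k / Gamma (α * k + 1) := by
  set M : ℝ := (2 * |z|) ^ α⁻¹
  have hM : 0 ≤ M := by positivity
  refine .of_norm_bounded (summable_geometric_two.mul_left (exp M)) fun k ↦ ?_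
  have hΓ : 0 < Gamma (α * k + 1) := Gamma_pos_of_pos (by positivity)
  have hMk : M ^ (α * k) = 2 ^ k * |z| ^ k := by
    rw [rpow_mul_natCast hM, rpow_inv_rpow (by positivity) hα.ne', mul_pow]
  have hgrowth : 2 ^ k * |z| ^ k * exp (-M) ≤ Gamma (α * k + 1) :=
    hMk ▸ rpow_mul_exp_neg_le_Gamma_add_one hM (by positivity)
  rw [norm_div, norm_pow, norm_eq_abs, norm_of_nonneg hΓ.le, div_le_iff₀ hΓ]
  calc
    |z| ^ k = exp M * (1 / 2) ^ k * (2 ^ k * |z| ^ k * exp (-M)) := by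
      rw [exp_neg, one_div_pow]
      field_simp
    _ ≤ exp M * (1 / 2) ^ k * Gamma (α * k + 1) := by gcongr

end GammaGrowth

section GeneralizedPowerSeries

theorem mul_rpow_sub_one_le_rpow_mul {p x z : ℝ} (hp : 0 ≤ p) (hx : 0 < x)
    (hz : z ∈ Ioo (x / 2) (2 * x)) :
    p * z ^ (p - 1) ≤ (exp 1 * (2 * x)) ^ p * (2 / x) := by
  have hz₀ : 0 < z := (half_pos hx).trans hz.1
  have hexp : p ≤ exp p := by linarith [add_one_le_exp p]
  have hinv : z⁻¹ ≤ 2 / x := by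
    simpa using inv_anti₀ (half_pos hx) hz.1.le
  calc
    p * z ^ (p - 1) = p * z ^ p * z⁻¹ := by rw [rpow_sub_one hz₀.ne', div_eq_mul_inv, mul_assoc]
    _ ≤ exp p * (2 * x) ^ p * (2 / x) := by
      gcongr
      exact hz.2.le
    _ = (exp 1 * (2 * x)) ^ p * (2 / x) := by
      rw [mul_rpow (exp_pos 1).le (by positivity), exp_one_rpow]

variable {ι : Type*} {p : ι → ℝ} {c : ι → E}

theorem hasDerivAt_tsum_rpow_smul [CompleteSpace E] (hp : ∀ i, 0 ≤ p i)
    (hc : ∀ r > 0, Summable fun i ↦ r ^ p i * ‖c i‖) {x : ℝ} (hx : 0 < x) :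
    HasDerivAt (fun z ↦ ∑' i, z ^ p i • c i) (∑' i, (p i * x ^ (p i - 1)) • c i) x := by
  have hxmem : x ∈ Ioo (x / 2) (2 * x) := ⟨by linarith, by linarith⟩
  have hsummable : Summable fun i ↦ x ^ p i • c i :=
    .of_norm <| by
      simpa only [norm_smul, norm_of_nonneg (rpow_nonneg hx.le _)] using hc x hx
  refine hasDerivAt_tsum_of_isPreconnected (g' := fun i z ↦ (p i * z ^ (p i - 1)) • c i)
    ((hc (exp 1 * (2 * x)) (by positivity)).mul_right (2 / x)) isOpen_Ioo isPreconnected_Ioo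
    (fun i z hz ↦ ?_) (fun i z hz ↦ ?_) hxmem hsummable hxmem
  all_goals have hz₀ : 0 < z := (half_pos hx).trans hz.1
  · exact (hasDerivAt_rpow_const (.inl hz₀.ne')).smul_const (c i)
  · have hpi := hp i
    rw [norm_smul, norm_of_nonneg (by positivity), mul_right_comm (_ ^ p i)]
    exact mul_le_mul_of_nonneg_right (mul_rpow_sub_one_le_rpow_mul hpi hx hz) (norm_nonneg _)

end GeneralizedPowerSeries

theorem hasSum_integral_smul_const_of_nonneg {X ι : Type*} [MeasurableSpace X] {μ : Measure X}
    [Countable ι] [CompleteSpace E] {K : ι → X → ℝ} {c : ι → E} (hK : ∀ i, Integrable (K i) μ)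
    (hK₀ : ∀ i, 0 ≤ᵐ[μ] K i) (hsum : Summable fun i ↦ ‖(∫ u, K i u ∂μ) • c i‖) :
    HasSum (fun i ↦ (∫ u, K i u ∂μ) • c i) (∫ u, ∑' i, K i u • c i ∂μ) := by
  have hnorm (i : ι) : ∫ u, ‖K i u • c i‖ ∂μ = ‖(∫ u, K i u ∂μ) • c i‖ := by
    rw [norm_smul, norm_of_nonneg (integral_nonneg_of_ae (hK₀ i)), ← integral_mul_const]
    refine integral_congr_ae ((hK₀ i).mono fun u hu ↦ ?_)
    simp only [norm_smul, norm_of_nonneg hu]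
  simpa only [integral_smul_const] using
    hasSum_integral_of_summable_integral_norm (fun i ↦ (hK i).smul_const (c i))
      (by simpa only [hnorm] using hsum)

section CaputoKernel

theorem integral_rpow_mul_sub_rpow {s t x : ℝ} (hs : 0 < s) (ht : 0 < t) (hx : 0 < x) :
    ∫ u in (0 : ℝ)..x, u ^ (s - 1) * (x - u) ^ (t - 1) =
      x ^ (s + t - 1) * (Gamma s * Gamma t / Gamma (s + t)) := by
  have hbeta := Complex.betaIntegral_scaled (s : ℂ) (t : ℂ) hx
  have hcast : ∫ u in (0 : ℝ)..x, (u : ℂ) ^ ((s : ℂ) - 1) * ((x : ℂ) - u) ^ ((t : ℂ) - 1) =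
      ∫ u in (0 : ℝ)..x, ((u ^ (s - 1) * (x - u) ^ (t - 1) : ℝ) : ℂ) := by
    refine intervalIntegral.integral_congr fun u hu ↦ ?_
    rw [uIcc_of_le hx.le] at hu
    push_cast [Complex.ofReal_cpow hu.1, Complex.ofReal_cpow (sub_nonneg.2 hu.2)]
    rfl
  rw [Complex.betaIntegral_eq_Gamma_mul_div _ _ (by simpa) (by simpa), hcast,
    intervalIntegral.integral_ofReal] at hbeta
  apply Complex.ofReal_injective
  rw [hbeta]
  push_cast [Complex.ofReal_cpow hx.le, ← Complex.Gamma_ofReal]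
  rfl

variable {α s x : ℝ}

theorem integral_sub_rpow_mul_deriv_rpow (hα : α < 1) (hs : 0 < s) (hx : 0 < x) :
    ∫ u in (0 : ℝ)..x, (x - u) ^ (-α) * (s * u ^ (s - 1)) =
      Gamma (1 - α) * (Gamma (s + 1) / Gamma (s + 1 - α) * x ^ (s - α)) := by
  calc
    _ = s * ∫ u in (0 : ℝ)..x, u ^ (s - 1) * (x - u) ^ (1 - α - 1) := by
      rw [← intervalIntegral.integral_const_mul]
      congr with u
      rw [sub_sub_cancel_left]
      ring
    _ = _ := by
      rw [integral_rpow_mul_sub_rpow hs (sub_pos.2 hα) hx, Gamma_add_one hs.ne',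
        show s + (1 - α) - 1 = s - α by ring, add_sub_assoc]
      ring

theorem intervalIntegrable_sub_rpow_mul_deriv_rpow (hα : α < 1) (hs : 0 < s) (hx : 0 < x) :
    IntervalIntegrable (fun u ↦ (x - u) ^ (-α) * (s * u ^ (s - 1))) volume 0 x := by
  have : 0 < Gamma (1 - α) := Gamma_pos_of_pos (by linarith)
  have : 0 < Gamma (s + 1) := Gamma_pos_of_pos (by linarith)
  have : 0 < Gamma (s + 1 - α) := Gamma_pos_of_pos (by linarith)
  apply intervalIntegral.intervalIntegrable_of_integral_ne_zero
  rw [integral_sub_rpow_mul_deriv_rpow hα hs hx]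
  positivity

end CaputoKernel

/-- The left Caputo fractional derivative of order `0 < α < 1` with base point `0`, for functions
with values in a real normed space. As `deriv` and the integral are total, it is defined for every
`f` and takes junk values when `f` is not differentiable or the integral diverges. -/
noncomputable def caputoDeriv (α : ℝ) (f : ℝ → E) (x : ℝ) : E :=
  (1 / Gamma (1 - α)) • ∫ u in (0 : ℝ)..x, (x - u) ^ (-α) • deriv f u

section CaputoDeriv

variable {α x : ℝ}

theorem caputoDeriv_congr {f g : ℝ → E} (hfg : EqOn f g (Ioi 0)) (hx : 0 ≤ x) :
    caputoDeriv α f x = caputoDeriv α g x := by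
  unfold caputoDeriv
  congr 1
  refine intervalIntegral.integral_congr_uIoo fun u hu ↦ ?_
  rw [uIoo_of_le hx] at hu
  simp only [(hfg.eventuallyEq_of_mem (Ioi_mem_nhds hu.1)).deriv_eq]

theorem caputoDeriv_const_add (v : E) (f : ℝ → E) :
    caputoDeriv α (fun z ↦ v + f z) x = caputoDeriv α f x := by
  simp only [caputoDeriv, deriv_const_add]

theorem caputoDeriv_tsum_rpow_smul [CompleteSpace E] {ι : Type*} [Countable ι] {p : ι → ℝ}
    {c : ι → E} (hα : α < 1) (hp : ∀ i, 0 < p i) (hc : ∀ r > 0, Summable fun i ↦ r ^ p i * ‖c i‖)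
    (hx : 0 < x) (hsum : Summable fun i ↦
      ‖(Gamma (p i + 1) / Gamma (p i + 1 - α) * x ^ (p i - α)) • c i‖) :
    caputoDeriv α (fun z ↦ ∑' i, z ^ p i • c i) x =
      ∑' i, (Gamma (p i + 1) / Gamma (p i + 1 - α) * x ^ (p i - α)) • c i := by
  have hΓ : Gamma (1 - α) ≠ 0 := (Gamma_pos_of_pos (sub_pos.2 hα)).ne'
  let K : ι → ℝ → ℝ := fun i u ↦ (x - u) ^ (-α) * (p i * u ^ (p i - 1))
  have hKint (i : ι) : ∫ u in Ioc 0 x, K i u =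
      Gamma (1 - α) * (Gamma (p i + 1) / Gamma (p i + 1 - α) * x ^ (p i - α)) := by
    rw [← intervalIntegral.integral_of_le hx.le, integral_sub_rpow_mul_deriv_rpow hα (hp i) hx]
  have hKnonneg (i : ι) : ∀ u ∈ Ioc 0 x, 0 ≤ K i u := fun u hu ↦
    mul_nonneg (rpow_nonneg (sub_nonneg.2 hu.2) _)
      (mul_nonneg (hp i).le (rpow_nonneg hu.1.le _))
  have hKsum : Summable fun i ↦ ‖(∫ u in Ioc 0 x, K i u) • c i‖ := by
    simpa only [hKint, mul_smul, norm_smul] using hsum.mul_left ‖Gamma (1 - α)‖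
  have hswap := hasSum_integral_smul_const_of_nonneg
    (fun i ↦ (intervalIntegrable_sub_rpow_mul_deriv_rpow hα (hp i) hx).1)
    (fun i ↦ ae_restrict_of_forall_mem measurableSet_Ioc (hKnonneg i)) hKsum
  have hderiv : EqOn (fun u ↦ (x - u) ^ (-α) • deriv (fun z ↦ ∑' i, z ^ p i • c i) u)
      (fun u ↦ ∑' i, K i u • c i) (Ioc 0 x) := fun u hu ↦ by
    simp only [(hasDerivAt_tsum_rpow_smul (fun i ↦ (hp i).le) hc hu.1).deriv, K, mul_smul,
      tsum_const_smul'']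
  rw [caputoDeriv, intervalIntegral.integral_of_le hx.le,
    setIntegral_congr_fun measurableSet_Ioc hderiv, ← hswap.tsum_eq, ← tsum_const_smul'']
  refine tsum_congr fun i ↦ ?_
  rw [hKint, smul_smul, ← mul_assoc, one_div_mul_cancel hΓ, one_mul]

end CaputoDeriv

/-- The `k`-th coefficient `A ^ k v / Γ(α k + 1)` of the Mittag-Leffler series of the operator `A`
applied to `v`. -/
noncomputable def mittagLefflerCoeff (α : ℝ) (A : E →L[ℝ] E) (v : E) (k : ℕ) : E :=
  (Gamma (α * k + 1))⁻¹ • (A ^ k) v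

/-- The orbit `x ↦ E_α(x ^ α A) v` of the operator Mittag-Leffler function, the fractional analogue
of `x ↦ exp (x A) v`. Meaningful for `x ≥ 0` only, since it uses real powers of `x`. -/
noncomputable def mittagLefflerOrbit (α : ℝ) (A : E →L[ℝ] E) (v : E) (x : ℝ) : E :=
  ∑' k : ℕ, x ^ (α * k) • mittagLefflerCoeff α A v k

section MittagLeffler

variable {α x : ℝ} (A : E →L[ℝ] E) (v : E)

theorem mittagLefflerCoeff_zero : mittagLefflerCoeff α A v 0 = v := by
  simp [mittagLefflerCoeff]

theorem Gamma_div_Gamma_smul_mittagLefflerCoeff_succ (hα : 0 < α) (k : ℕ) :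
    (Gamma (α * (k + 1) + 1) / Gamma (α * (k + 1) + 1 - α)) • mittagLefflerCoeff α A v (k + 1) =
      A (mittagLefflerCoeff α A v k) := by
  have hΓ : Gamma (α * (k + 1) + 1) ≠ 0 := (Gamma_pos_of_pos (by positivity)).ne'
  rw [mittagLefflerCoeff, mittagLefflerCoeff, map_smul, smul_smul, Nat.cast_succ,
    div_mul_eq_mul_div, mul_inv_cancel₀ hΓ, one_div, pow_succ', mul_apply_eq_comp,
    show α * (k + 1) + 1 - α = α * k + 1 by ring]

theorem norm_pow_apply_le (k : ℕ) : ‖(A ^ k) v‖ ≤ ‖A‖ ^ k * ‖v‖ := by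
  induction k with
  | zero => simp
  | succ k ih =>
    rw [pow_succ', pow_succ', mul_apply_eq_comp, mul_assoc]
    exact A.le_opNorm_of_le ih

theorem summable_rpow_mul_norm_mittagLefflerCoeff (hα : 0 < α) (hx : 0 ≤ x) :
    Summable fun k : ℕ ↦ x ^ (α * k) * ‖mittagLefflerCoeff α A v k‖ := by
  refine .of_nonneg_of_le (fun k ↦ by positivity) (fun k ↦ ?_)
    ((summable_pow_div_Gamma hα (x ^ α * ‖A‖)).mul_right ‖v‖)
  have hΓ : 0 < Gamma (α * k + 1) := Gamma_pos_of_pos (by positivity)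
  calc
    x ^ (α * k) * ‖mittagLefflerCoeff α A v k‖
        = x ^ (α * k) * ((Gamma (α * k + 1))⁻¹ * ‖(A ^ k) v‖) := by
      rw [mittagLefflerCoeff, norm_smul, norm_of_nonneg (inv_nonneg.2 hΓ.le)]
    _ ≤ x ^ (α * k) * ((Gamma (α * k + 1))⁻¹ * (‖A‖ ^ k * ‖v‖)) := by
      gcongr
      exact norm_pow_apply_le A v k
    _ = (x ^ α * ‖A‖) ^ k / Gamma (α * k + 1) * ‖v‖ := by
      rw [rpow_mul_natCast hx, mul_pow]
      ring

theorem mittagLefflerOrbit_zero (hα : 0 < α) : mittagLefflerOrbit α A v 0 = v := by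
  rw [mittagLefflerOrbit, tsum_eq_single 0 fun k hk ↦ ?_]
  · simp [mittagLefflerCoeff_zero]
  · rw [zero_rpow (by positivity), zero_smul]

variable [CompleteSpace E]

theorem summable_rpow_smul_mittagLefflerCoeff (hα : 0 < α) (hx : 0 ≤ x) :
    Summable fun k : ℕ ↦ x ^ (α * k) • mittagLefflerCoeff α A v k :=
  .of_norm_bounded (summable_rpow_mul_norm_mittagLefflerCoeff A v hα hx) fun k ↦ by
    rw [norm_smul, norm_of_nonneg (by positivity)]

theorem differentiableAt_mittagLefflerOrbit (hα : 0 < α) (hx : 0 < x) :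
    DifferentiableAt ℝ (mittagLefflerOrbit α A v) x :=
  (hasDerivAt_tsum_rpow_smul (fun k : ℕ ↦ by positivity)
    (fun _ hr ↦ summable_rpow_mul_norm_mittagLefflerCoeff A v hα hr.le) hx).differentiableAt

theorem mittagLefflerOrbit_eq_add_tsum (hα : 0 < α) (hx : 0 ≤ x) :
    mittagLefflerOrbit α A v x =
      v + ∑' k : ℕ, x ^ (α * (k + 1)) • mittagLefflerCoeff α A v (k + 1) := by
  rw [mittagLefflerOrbit, (summable_rpow_smul_mittagLefflerCoeff A v hα hx).tsum_eq_zero_add]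
  simp [mittagLefflerCoeff_zero]

theorem caputoDeriv_mittagLefflerOrbit (hα : 0 < α) (hα₁ : α < 1) (hx : 0 < x) :
    caputoDeriv α (mittagLefflerOrbit α A v) x = A (mittagLefflerOrbit α A v x) := by
  have hshift (k : ℕ) :
      (Gamma (α * (k + 1) + 1) / Gamma (α * (k + 1) + 1 - α) * x ^ (α * (k + 1) - α)) •
        mittagLefflerCoeff α A v (k + 1) = A (x ^ (α * k) • mittagLefflerCoeff α A v k) := by
    rw [mul_comm, mul_smul, Gamma_div_Gamma_smul_mittagLefflerCoeff_succ A v hα, map_smul,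
      show α * (k + 1) - α = α * k by ring]
  have hcoeff (r : ℝ) (hr : 0 < r) :
      Summable fun k : ℕ ↦ r ^ (α * (k + 1)) * ‖mittagLefflerCoeff α A v (k + 1)‖ := by
    simpa using (summable_nat_add_iff 1).2
      (summable_rpow_mul_norm_mittagLefflerCoeff A v hα hr.le)
  have hsum : Summable fun k : ℕ ↦ ‖A (x ^ (α * k) • mittagLefflerCoeff α A v k)‖ := by
    refine .of_nonneg_of_le (fun _ ↦ norm_nonneg _) (fun k ↦ A.le_opNorm _) (.mul_left ‖A‖ ?_)
    simpa [norm_smul, abs_of_nonneg (rpow_nonneg hx.le _)]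
      using summable_rpow_mul_norm_mittagLefflerCoeff A v hα hx.le
  calc
    caputoDeriv α (mittagLefflerOrbit α A v) x
        = caputoDeriv α
            (fun z ↦ ∑' k : ℕ, z ^ (α * (k + 1)) • mittagLefflerCoeff α A v (k + 1)) x :=
      (caputoDeriv_congr (fun z hz ↦ mittagLefflerOrbit_eq_add_tsum A v hα hz.le) hx.le).trans
        (caputoDeriv_const_add v _)
    _ = ∑' k : ℕ, A (x ^ (α * k) • mittagLefflerCoeff α A v k) := by
      rw [caputoDeriv_tsum_rpow_smul hα₁ (fun k : ℕ ↦ by positivity) hcoeff hx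
        (by simpa only [hshift] using hsum)]
      exact tsum_congr hshift
    _ = A (mittagLefflerOrbit α A v x) :=
      (A.map_tsum (summable_rpow_smul_mittagLefflerCoeff A v hα hx.le)).symm

theorem mittagLeffler_solves_fractional_relaxation_general (hα : 0 < α) (hα₁ : α < 1) {y : ℝ → E}
    (hy : EqOn y (mittagLefflerOrbit α A v) (Ici 0)) :
    y 0 = v ∧ DifferentiableOn ℝ y (Ioi 0) ∧ ∀ x > 0, caputoDeriv α y x = A (y x) := by
  have hy' : EqOn y (mittagLefflerOrbit α A v) (Ioi 0) := hy.mono Ioi_subset_Ici_self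
  refine ⟨?_, ?_, fun x hx ↦ ?_⟩
  · rw [hy self_mem_Ici, mittagLefflerOrbit_zero A v hα]
  · exact DifferentiableOn.congr (fun x hx ↦
      (differentiableAt_mittagLefflerOrbit A v hα hx).differentiableWithinAt) hy'
  · rw [caputoDeriv_congr hy' hx.le, caputoDeriv_mittagLefflerOrbit A v hα hα₁ hx, hy' hx]

end MittagLeffler

/-- The Mittag-Leffler function solves the fractional relaxation equation
`ᶜD^α y = y`, `y 0 = 1` (Example 2): for `0 < α < 1`, the function
`y x = ∑ x^(αk)/Γ(αk+1)` satisfies `y 0 = 1`, is differentiable on `(0,∞)`,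
and `ᶜD^α y x = y x` for all `x > 0`. -/
theorem mittagLeffler_solves_fractional_relaxation
    (α : ℝ) (hα : 0 < α) (hα1 : α < 1)
    (y : ℝ → ℝ)
    (hy : ∀ x : ℝ, y x = ∑' k : ℕ, x ^ (α * k) / Real.Gamma (α * k + 1)) :
    y 0 = 1 ∧ DifferentiableOn ℝ y (Set.Ioi 0) ∧
    ∀ x : ℝ, 0 < x →
      (1 / Real.Gamma (1 - α)) *
          ∫ u in (0:ℝ)..x, deriv y u * (x - u) ^ (-α) = y x := by
  simpa [caputoDeriv, mul_comm] using
    mittagLeffler_solves_fractional_relaxation_general (1 : ℝ →L[ℝ] ℝ) 1 hα hα1 fun x _ ↦ by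
      simp [hy x, mittagLefflerOrbit, mittagLefflerCoeff, div_eq_mul_inv]
end
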